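/- Consider a K-layer feedforward network f^w with monotone nondecreasing activation h, an input x ∈ ℝ^{n_0} and ε ≥ 0, and let f^{w,L,ε}, f^{w,U,ε} be the output bounds computed by interval bound propagation. Then for every x' ∈ ℝ^{n_0} with ‖x − x'‖_∞ ≤ ε, the network output satisfies f^{w,L,ε} ≤ f^w(x') ≤ f^{w,U,ε} componentwise; i.e., IBP yields a valid bounding box for the network output over the whole ℓ∞ ε-ball. -/

import Mathlib

/-- Activations of a feedforward network: `netPhi … x 0 = x` (the input `φ_(0)`) and
`netPhi … x (k+1) = h (W_k (netPhi … x k) + b_k)` (the activation `φ_(k+1)`).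
For a `K`-layer network only the values with `k ≤ K - 1` are used. -/
noncomputable def netPhi (n : ℕ → ℕ)
    (W : ∀ k : ℕ, Matrix (Fin (n (k + 1))) (Fin (n k)) ℝ)
    (b : ∀ k : ℕ, Fin (n (k + 1)) → ℝ) (h : ℝ → ℝ)
    (x : Fin (n 0) → ℝ) : (k : ℕ) → Fin (n k) → ℝ
  | 0 => x
  | (k + 1) => fun i => h (((W k).mulVec (netPhi n W b h x k) + b k) i)

/-- Pre-activations: `netPre … x k = W_k φ_(k) + b_k`, i.e. the pre-activation
`f_(k+1)` of the network.  The output of a `K`-layer network is `f^w(x) = netPre … x (K-1)`. -/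
noncomputable def netPre (n : ℕ → ℕ)
    (W : ∀ k : ℕ, Matrix (Fin (n (k + 1))) (Fin (n k)) ℝ)
    (b : ∀ k : ℕ, Fin (n (k + 1)) → ℝ) (h : ℝ → ℝ)
    (x : Fin (n 0) → ℝ) (k : ℕ) : Fin (n (k + 1)) → ℝ :=
  (W k).mulVec (netPhi n W b h x k) + b k

/-- Interval bound propagation on the activations: `ibpPhi … x ε k = (φ_(k)^L, φ_(k)^U)`.
At `k = 0` the bounds are `x ∓ ε·𝟙`; at `k+1` they are `h (μ_{k+1} ∓ r_{k+1})` with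
`μ_{k+1} = W_k (φ_(k)^U + φ_(k)^L)/2 + b_k` and `r_{k+1} = |W_k| (φ_(k)^U − φ_(k)^L)/2`. -/
noncomputable def ibpPhi (n : ℕ → ℕ)
    (W : ∀ k : ℕ, Matrix (Fin (n (k + 1))) (Fin (n k)) ℝ)
    (b : ∀ k : ℕ, Fin (n (k + 1)) → ℝ) (h : ℝ → ℝ)
    (x : Fin (n 0) → ℝ) (ε : ℝ) : (k : ℕ) → (Fin (n k) → ℝ) × (Fin (n k) → ℝ)
  | 0 => (fun i => x i - ε, fun i => x i + ε)
  | (k + 1) =>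
      let L := (ibpPhi n W b h x ε k).1
      let U := (ibpPhi n W b h x ε k).2
      let μ := (W k).mulVec (fun i => (U i + L i) / 2) + b k
      let r := (Matrix.of fun i j => |W k i j|).mulVec (fun i => (U i - L i) / 2)
      (fun i => h (μ i - r i), fun i => h (μ i + r i))

/-- Interval bound propagation on the pre-activations:
`ibpPre … x ε k = (f_(k+1)^L, f_(k+1)^U) = (μ_{k+1} − r_{k+1}, μ_{k+1} + r_{k+1})`.
The IBP output bounds of a `K`-layer network are `(f^{w,L,ε}, f^{w,U,ε}) = ibpPre … x ε (K-1)`. -/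
noncomputable def ibpPre (n : ℕ → ℕ)
    (W : ∀ k : ℕ, Matrix (Fin (n (k + 1))) (Fin (n k)) ℝ)
    (b : ∀ k : ℕ, Fin (n (k + 1)) → ℝ) (h : ℝ → ℝ)
    (x : Fin (n 0) → ℝ) (ε : ℝ) (k : ℕ) : (Fin (n (k + 1)) → ℝ) × (Fin (n (k + 1)) → ℝ) :=
  let L := (ibpPhi n W b h x ε k).1
  let U := (ibpPhi n W b h x ε k).2
  let μ := (W k).mulVec (fun i => (U i + L i) / 2) + b k
  let r := (Matrix.of fun i j => |W k i j|).mulVec (fun i => (U i - L i) / 2)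
  (fun i => μ i - r i, fun i => μ i + r i)

theorem ibp_affine_aux {p q : ℕ} (A : Matrix (Fin p) (Fin q) ℝ) (c : Fin p → ℝ)
    (L U v : Fin q → ℝ) (hv : ∀ j, L j ≤ v j ∧ v j ≤ U j) (i : Fin p) :
    (A.mulVec (fun j => (U j + L j) / 2) + c) i
        - (Matrix.of fun i j => |A i j|).mulVec (fun j => (U j - L j) / 2) i
        ≤ (A.mulVec v + c) i ∧
      (A.mulVec v + c) i ≤ (A.mulVec (fun j => (U j + L j) / 2) + c) i
        + (Matrix.of fun i j => |A i j|).mulVec (fun j => (U j - L j) / 2) i := by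
  have key : |∑ j, A i j * v j - ∑ j, A i j * ((U j + L j) / 2)|
      ≤ ∑ j, |A i j| * ((U j - L j) / 2) := by
    rw [← Finset.sum_sub_distrib]
    refine (Finset.abs_sum_le_sum_abs _ _).trans (Finset.sum_le_sum fun j _ => ?_)
    rw [← mul_sub, abs_mul]
    refine mul_le_mul_of_nonneg_left ?_ (abs_nonneg _)
    obtain ⟨h1, h2⟩ := hv j
    rw [abs_le]
    constructor <;> linarith
  rw [abs_le] at key
  simp only [Pi.add_apply, Matrix.mulVec, dotProduct, Matrix.of_apply]
  constructor <;> linarith [key.1, key.2]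

theorem ibp_phi_aux (n : ℕ → ℕ)
    (W : ∀ k : ℕ, Matrix (Fin (n (k + 1))) (Fin (n k)) ℝ)
    (b : ∀ k : ℕ, Fin (n (k + 1)) → ℝ) (h : ℝ → ℝ) (hmono : Monotone h)
    (x : Fin (n 0) → ℝ) (ε : ℝ)
    (x' : Fin (n 0) → ℝ) (hx' : ‖x - x'‖ ≤ ε) (k : ℕ) :
    ∀ i, (ibpPhi n W b h x ε k).1 i ≤ netPhi n W b h x' k i ∧
        netPhi n W b h x' k i ≤ (ibpPhi n W b h x ε k).2 i := by
  induction k with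
  | zero =>
    intro i
    have h1 := (norm_le_pi_norm (x - x') i).trans hx'
    rw [Pi.sub_apply, Real.norm_eq_abs, abs_le] at h1
    simp only [ibpPhi, netPhi]
    constructor <;> linarith [h1.1, h1.2]
  | succ k ih =>
    intro i
    have h1 := ibp_affine_aux (W k) (b k) _ _ _ ih i
    simp only [ibpPhi, netPhi]
    exact ⟨hmono h1.1, hmono h1.2⟩

/-- IBP yields a valid bounding box for the network output.  For a
`K`-layer network (`K ≥ 1`) with monotone nondecreasing activation `h`, input `x` and
radius `ε ≥ 0`, every `x'` with `‖x − x'‖_∞ ≤ ε` satisfies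
`f^{w,L,ε} ≤ f^w(x') ≤ f^{w,U,ε}` componentwise, where `f^w(x') = netPre … x' (K-1)`
and `(f^{w,L,ε}, f^{w,U,ε}) = ibpPre … x ε (K-1)`. -/
theorem ibp_output_bounds (n : ℕ → ℕ)
    (W : ∀ k : ℕ, Matrix (Fin (n (k + 1))) (Fin (n k)) ℝ)
    (b : ∀ k : ℕ, Fin (n (k + 1)) → ℝ) (h : ℝ → ℝ) (hmono : Monotone h)
    (K : ℕ) (hK : 1 ≤ K) (x : Fin (n 0) → ℝ) (ε : ℝ) (hε : 0 ≤ ε)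
    (x' : Fin (n 0) → ℝ) (hx' : ‖x - x'‖ ≤ ε) :
    ∀ i, (ibpPre n W b h x ε (K - 1)).1 i ≤ netPre n W b h x' (K - 1) i ∧
        netPre n W b h x' (K - 1) i ≤ (ibpPre n W b h x ε (K - 1)).2 i := by
  intro i
  exact ibp_affine_aux (W (K - 1)) (b (K - 1)) _ _ _
    (ibp_phi_aux n W b h hmono x ε x' hx' (K - 1)) i
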